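/- Let F be a multigraph, let k ≥ 1 and K ≥ 1 be integers, and let H = F^{2k-1}. There exists a constant L0, depending only on |V(H)|, k and K, such that for all L ≥ L0 the following holds: if G is an H-free K-almost-regular graph on n vertices (n sufficiently large) with minimum degree δ ≥ L^{100^k·|V(H)|}, then for every 2 ≤ ℓ ≤ k, the number of L-admissible but not L-good paths of length ℓ in G is at most 2n(Kδ)^ℓ/f(ℓ-1,L). -/

import Mathlib

/-!
The proof finds the subdivision `H` inside a graph with too many admissible paths that are not good.
Put `f = f(ℓ - 1, L)`, so that `f(ℓ, L) = f ^ 5`, and `d = Kδ`; all constants depending on `H` are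
absorbed by a factor `L ≤ f`.

A pair `(v, x)` is bad if it is joined by an admissible path that is not good, hence by more than
`f ^ 5` admissible paths. Proper subpaths of these are good, so at most `f ^ 2` of them pass through
a given vertex at a given interior position, and at most `f` do so at the second or at the
penultimate position. It follows that bad pairs are joined by a path of length `ℓ` whose interior
avoids any small set (`Bad.exists_avoiding`), and that `x` has at least `f ^ 4` neighbours in the set
`W` of endpoints of paths of length `ℓ - 1` from `v` (`Bad.many_neighbours`); moreover
`|W| ≤ d ^ (ℓ - 1)`.

If the bound fails, then by averaging some vertex `c` has more than `2 d ^ ℓ / f ^ 2` pairs `(v, x)`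
such that `v` is a neighbour of `c`, `(v, x)` is bad, and `x` is the end of a path of length `ℓ - 1`
from `c` (`ncard_bad_paths_le`). Let `A v` be the set of these `x` for given `v`. Call `x` and `y`
linked if they lie together in many of the sets `A v`; then they are joined, through such a `v`, by a
path of length `2ℓ` avoiding any small set (`exists_linking_path`). There are at most `d ^ (2ℓ - 2)`
pairs `(x, y)` in all and each unlinked one is in few of the sets, so a further averaging
(`exists_dense_vertex`) yields a `v` with `|A v| ≥ d ^ (ℓ - 1) / f ^ 2` in which almost all pairs are
linked.

For this `v`, every vertex of `A = A v` has at least `f ^ 4` neighbours in `W`, while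
`|W| ≤ f ^ 2 |A|`. Hence the graph between `A` and `W` remains dense after deleting few vertices of
`W` and half of `A`, and contains spiders with legs of length `k - ℓ` ending in `A`. Choosing them
greedily gives one spider for every vertex of the multigraph, with one leg for every edge, which are
disjoint and have mutually linked leaves (`exists_linked_spiders`). Joining leaves by paths of
length `2ℓ` replaces each edge by a path of length `(k - ℓ) + 2ℓ + (k - ℓ) = 2k`, which is the
required subdivision (`contains_of_linked_spiders`).
-/

open SimpleGraph

variable {V : Type*} [Fintype V] [DecidableEq V]

/-- The restriction of `p : ℕ → V` to `[0, ℓ]` is a path in `G`: consecutive vertices are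
adjacent and all vertices `p 0, …, p ℓ` are distinct. -/
def PathSeq (G : SimpleGraph V) (ℓ : ℕ) (p : ℕ → V) : Prop :=
  (∀ i, i < ℓ → G.Adj (p i) (p (i + 1))) ∧
  ∀ i j, i < j → j ≤ ℓ → p i ≠ p j

/-- `p` is padded beyond index `ℓ`; used so that each finite sequence corresponds to a
unique function `ℕ → V` when counting. -/
def PadSeq (ℓ : ℕ) (p : ℕ → V) : Prop := ∀ i, ℓ ≤ i → p i = p ℓ

/-- `f(ℓ, L) = L^(5^ℓ)`. -/
noncomputable def fBound (ℓ : ℕ) (L : ℝ) : ℝ := L ^ (5 ^ ℓ)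

/-- The recursive notion of an `L`-good path of length `ℓ` (as a sequence `p 0, …, p ℓ`):
`p` is a path, every proper subpath is `L`-good, and the number of `L`-admissible paths of
length `ℓ` from `p 0` to `p ℓ` is at most `f(ℓ, L)`. -/
def Good (G : SimpleGraph V) (L : ℝ) (ℓ : ℕ) (p : ℕ → V) : Prop :=
  (PathSeq G ℓ p ∧
    ∀ i j, i < j → j ≤ ℓ → ¬(i = 0 ∧ j = ℓ) → Good G L (j - i) (fun a => p (i + a))) ∧
  (Set.ncard {q : ℕ → V | q 0 = p 0 ∧ q ℓ = p ℓ ∧ PadSeq ℓ q ∧ PathSeq G ℓ q ∧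
      ∀ i j, i < j → j ≤ ℓ → ¬(i = 0 ∧ j = ℓ) → Good G L (j - i) (fun a => q (i + a))} : ℝ)
    ≤ fBound ℓ L
termination_by ℓ
decreasing_by all_goals omega

/-- `L`-admissible: a path all of whose proper subpaths are `L`-good. -/
def Admissible (G : SimpleGraph V) (L : ℝ) (ℓ : ℕ) (p : ℕ → V) : Prop :=
  PathSeq G ℓ p ∧
    ∀ i j, i < j → j ≤ ℓ → ¬(i = 0 ∧ j = ℓ) → Good G L (j - i) (fun a => p (i + a))

/-- There exist `N` pairwise internally vertex-disjoint paths of length `m` from `x` to `y`. -/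
def ManyDisjointPaths (G : SimpleGraph V) (m : ℕ) (x y : V) (N : ℕ) : Prop :=
  ∃ P : Fin N → (ℕ → V),
    (∀ a, PathSeq G m (P a) ∧ P a 0 = x ∧ P a m = y) ∧
    (∀ a b, a ≠ b → ∃ i, i ≤ m ∧ P a i ≠ P b i) ∧
    ∀ a b, a ≠ b → ∀ i j, 0 < i → i < m → 0 < j → j < m → P a i ≠ P b j

/-- A pair `(x, y)` of distinct vertices is `(i,j)`-rich (with parameters `k`, `h`, `K`, `δ`). -/
def Rich (G : SimpleGraph V) (k h : ℕ) (K δ : ℝ) (i j : ℕ) (x y : V) : Prop :=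
  x ≠ y ∧
  ((2 * (i + j) * h * (2 * k + 1) + 2 * (i + 1) * j : ℕ) : ℝ) *
      (K * δ) ^ ((i : ℤ) + (j : ℤ) - 1) <
    (Set.ncard {PQ : (ℕ → V) × (ℕ → V) |
      PathSeq G i PQ.1 ∧ PQ.1 0 = x ∧ PadSeq i PQ.1 ∧
      PathSeq G j PQ.2 ∧ PQ.2 0 = y ∧ PadSeq j PQ.2 ∧
      ManyDisjointPaths G (2 * k - i - j) (PQ.1 i) (PQ.2 j) ((h + 2) * (2 * k + 1) + 1)} : ℝ)

/-- `(x, y)` is an `(ℓ, L)`-bad pair: there is an `L`-admissible but not `L`-good path of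
length `ℓ` from `x` to `y`. -/
def Bad (G : SimpleGraph V) (L : ℝ) (ℓ : ℕ) (x y : V) : Prop :=
  ∃ p : ℕ → V, p 0 = x ∧ p ℓ = y ∧ Admissible G L ℓ p ∧ ¬ Good G L ℓ p

/-- `G` contains the `(s-1)`-subdivision of the multigraph on `Fin t` with multiplicity
function `m` as a subgraph: each parallel edge between `a < b` is replaced by a path of
length `s`, these paths being pairwise internally vertex-disjoint, with internal vertices
distinct from all branch vertices. -/
def ContainsMultiSubdiv (G : SimpleGraph V) (t : ℕ) (m : Fin t → Fin t → ℕ) (s : ℕ) : Prop :=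
  ∃ (φ : Fin t → V) (π : (a : Fin t) → (b : Fin t) → Fin (m a b) → (ℕ → V)),
    Function.Injective φ ∧
    (∀ a b, a < b → ∀ c, PathSeq G s (π a b c) ∧ π a b c 0 = φ a ∧ π a b c s = φ b) ∧
    (∀ a b, a < b → ∀ c, ∀ i, 0 < i → i < s → ∀ d, π a b c i ≠ φ d) ∧
    (∀ a b, a < b → ∀ a' b', a' < b' → ∀ (c : Fin (m a b)) (c' : Fin (m a' b')),
      (a, b, (c : ℕ)) ≠ (a', b', (c' : ℕ)) →
      ∀ i i', 0 < i → i < s → 0 < i' → i' < s → π a b c i ≠ π a' b' c' i')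

/-- The number of vertices of `H = F^{2k-1}` where `F` is the multigraph on `Fin t` with
multiplicity function `m`: the `t` branch vertices plus `2k - 1` internal vertices for each
edge (counted with multiplicity). -/
def nH (t k : ℕ) (m : Fin t → Fin t → ℕ) : ℕ :=
  t + (2 * k - 1) * ∑ p : Fin t × Fin t, if p.1 < p.2 then m p.1 p.2 else 0

/-- The minimum degree of `G`. -/
noncomputable def minDeg (G : SimpleGraph V) : ℕ :=
  sInf {d | ∃ v, (G.neighborSet v).ncard = d}

/-- The maximum degree of `G`. -/
noncomputable def maxDeg (G : SimpleGraph V) : ℕ :=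
  sSup {d | ∃ v, (G.neighborSet v).ncard = d}

/-- Adjacency in the auxiliary graph `𝒢_ℓ(v)`: the `2k+1` vertices `u 0 = v, u 1, …, u k,
u' 1, …, u' k` are all distinct and there exist `0 ≤ i, j ≤ k-1` such that the pair
`(u ℓ, u' ℓ)` is `(i,j)`-rich (symmetrised so that this defines a graph). -/
def AuxAdj (G : SimpleGraph V) (k h : ℕ) (K δ : ℝ) (ℓ : Fin (k + 1))
    (u u' : Fin (k + 1) → V) : Prop :=
  Function.Injective u ∧ Function.Injective u' ∧
  (∀ a b : Fin (k + 1), a ≠ 0 → b ≠ 0 → u a ≠ u' b) ∧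
  ∃ i j : ℕ, i < k ∧ j < k ∧
    (Rich G k h K δ i j (u ℓ) (u' ℓ) ∨ Rich G k h K δ i j (u' ℓ) (u ℓ))

/-- `r` satisfies the `k`-colour Ramsey property for `t`: every `k`-colouring of the edges of
the complete graph on `r` vertices contains a monochromatic complete graph on `t` vertices. -/
def RamseyProp (k t r : ℕ) : Prop :=
  ∀ χ : Fin r → Fin r → Fin k, (∀ a b, χ a b = χ b a) →
    ∃ (col : Fin k) (s : Finset (Fin r)), s.card = t ∧
      ∀ a ∈ s, ∀ b ∈ s, a ≠ b → χ a b = col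

set_option linter.unusedSectionVars false

/-! ### Greedy choices and lists of vertices -/

/-- Choosing one object for each index so that any two choices are compatible: it is enough that
every partial choice can be extended. -/
lemma exists_greedy {ι α : Type*} [Fintype ι] [DecidableEq ι] [Nonempty α]
    (P : ι → α → Prop) (R : α → α → Prop) (hR : ∀ x y, R x y → R y x)
    (h : ∀ (S : Finset ι) (g : ι → α), (∀ i ∈ S, P i (g i)) → ∀ e, e ∉ S →
      ∃ x, P e x ∧ ∀ i ∈ S, R x (g i)) :
    ∃ g : ι → α, (∀ i, P i (g i)) ∧ ∀ i j, i ≠ j → R (g i) (g j) := by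
  have key : ∀ S : Finset ι, ∃ g : ι → α, (∀ i ∈ S, P i (g i)) ∧
      ∀ i ∈ S, ∀ j ∈ S, i ≠ j → R (g i) (g j) := by
    intro S
    induction S using Finset.induction_on with
    | empty => exact ⟨fun _ => Classical.arbitrary α, by simp, by simp⟩
    | insert e S he ih =>
      obtain ⟨g, hg, hgR⟩ := ih
      obtain ⟨x, hx, hxR⟩ := h S g hg e he
      have hne : ∀ i ∈ S, i ≠ e := fun i hi hie => he (hie ▸ hi)
      refine ⟨Function.update g e x, ?_, ?_⟩
      · intro i hi
        rcases Finset.mem_insert.1 hi with rfl | hi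
        · simpa using hx
        · simpa [Function.update_of_ne (hne i hi)] using hg i hi
      · intro i hi j hj hij
        rcases Finset.mem_insert.1 hi with rfl | hi' <;>
          rcases Finset.mem_insert.1 hj with rfl | hj'
        · exact absurd rfl hij
        · simpa [Function.update_of_ne (hne j hj')] using hxR j hj'
        · simpa [Function.update_of_ne (hne i hi')] using hR _ _ (hxR i hi')
        · simpa [Function.update_of_ne (hne i hi'), Function.update_of_ne (hne j hj')]
            using hgR i hi' j hj' hij
  obtain ⟨g, h1, h2⟩ := key Finset.univ
  exact ⟨g, fun i => h1 i (Finset.mem_univ _),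
    fun i j => h2 i (Finset.mem_univ _) j (Finset.mem_univ _)⟩

/-- The edges of the multigraph with multiplicity function `m`; each edge occurs once for every
ordering of its two ends. -/
abbrev EdgeIdx {t : ℕ} (m : Fin t → Fin t → ℕ) : Type :=
  Σ p : Fin t × Fin t, Fin (m p.1 p.2)

/-- A subdivision presented by the lists of internal vertices of its subdivided edges. -/
lemma containsMultiSubdiv_of_lists {t s : ℕ} {m : Fin t → Fin t → ℕ} (G : SimpleGraph V)
    (φ : Fin t → V) (hφ : Function.Injective φ)
    (I : EdgeIdx m → List V)
    (hlen : ∀ e, (I e).length + 1 = s)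
    (hchain : ∀ e, List.IsChain G.Adj (φ e.1.1 :: (I e ++ [φ e.1.2])))
    (hnd : ∀ e, (I e).Nodup) (hφI : ∀ e d, φ d ∉ I e)
    (hdisj : ∀ e e', e ≠ e' → List.Disjoint (I e) (I e')) :
    ContainsMultiSubdiv G t m s := by
  have hget : ∀ e x y i, 0 < i → i < s → (φ x :: (I e ++ [φ y])).getD i (φ x) ∈ I e := by
    intro e x y i h0 hi
    obtain ⟨j, rfl⟩ : ∃ j, i = j + 1 := ⟨i - 1, by omega⟩
    have hl := hlen e
    have hj : j < (I e).length := by omega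
    simp [List.getD_eq_getElem?_getD, List.getElem?_append_left hj, List.getElem?_eq_getElem hj]
  refine ⟨φ, fun a b c i => (φ a :: (I ⟨(a, b), c⟩ ++ [φ b])).getD i (φ a), hφ, ?_, ?_, ?_⟩
  · intro a b hab c
    have hl := hlen ⟨(a, b), c⟩
    have hch := hchain ⟨(a, b), c⟩
    have hn : (φ a :: (I ⟨(a, b), c⟩ ++ [φ b])).Nodup := by
      have h1 := hφI ⟨(a, b), c⟩
      have h2 : φ a ≠ φ b := fun h => hab.ne (hφ h)
      simp only [List.nodup_cons, List.mem_append, List.mem_singleton, List.nodup_append]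
      refine ⟨by simp [h1, h2], hnd _, by simp, ?_⟩
      rintro x hx y rfl rfl
      exact h1 _ hx
    have hlen' : (φ a :: (I ⟨(a, b), c⟩ ++ [φ b])).length = s + 1 := by simp; omega
    refine ⟨⟨?_, ?_⟩, by simp, ?_⟩
    · intro i hi
      rw [List.isChain_iff_getElem] at hch
      have := hch i (by simp at hlen' ⊢; omega)
      dsimp only
      rwa [List.getD_eq_getElem _ _ (by omega), List.getD_eq_getElem _ _ (by omega)]
    · intro i j hij hj h
      dsimp only at h
      rw [List.getD_eq_getElem _ _ (by omega), List.getD_eq_getElem _ _ (by omega),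
        hn.getElem_inj_iff] at h
      omega
    · rw [← hl]; simp [List.getD_eq_getElem?_getD]
  · intro a b _ c i h0 hi d h
    exact hφI ⟨(a, b), c⟩ d (h ▸ hget ⟨(a, b), c⟩ a b i h0 hi)
  · intro a b _ a' b' _ c c' hne i i' h0 hi h0' hi' h
    have hne' : (⟨(a, b), c⟩ : Σ p : Fin t × Fin t, Fin (m p.1 p.2)) ≠ ⟨(a', b'), c'⟩ := by
      intro h
      cases h
      exact hne rfl
    dsimp only at h
    exact hdisj _ _ hne' (hget ⟨(a, b), c⟩ a b i h0 hi)
      (h ▸ hget ⟨(a', b'), c'⟩ a' b' i' h0' hi')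

/-! ### Spiders in a dense bipartite relation -/

/-- A bipartite relation with more than `D` times as many related pairs as vertices has a nonempty
part in which all degrees are at least `D`. -/
lemma exists_minDegree_sub (r : V → V → Prop) [DecidableRel r] (D : ℕ) (A W : Finset V)
    (h : D * (A.card + W.card) < ∑ a ∈ A, ∑ w ∈ W, if r a w then 1 else 0) :
    ∃ A' ⊆ A, ∃ W' ⊆ W, A'.Nonempty ∧ (∀ a ∈ A', D ≤ (W'.filter (r a)).card) ∧
      ∀ w ∈ W', D ≤ (A'.filter (fun a => r a w)).card := by
  induction hn : A.card + W.card using Nat.strong_induction_on generalizing A W with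
  | _ n ih =>
    by_cases h1 : ∃ a ∈ A, (W.filter (r a)).card < D
    · obtain ⟨a, ha, hlt⟩ := h1
      have hc := Finset.card_erase_add_one ha
      rw [← Finset.add_sum_erase _ _ ha, ← Finset.card_filter] at h
      obtain ⟨A', hA', W', hW', h2⟩ := ih ((A.erase a).card + W.card) (by omega) (A.erase a) W
        (by rw [← hc] at h; nlinarith) rfl
      exact ⟨A', hA'.trans (Finset.erase_subset _ _), W', hW', h2⟩
    by_cases h2 : ∃ w ∈ W, (A.filter (fun a => r a w)).card < D
    · obtain ⟨w, hw, hlt⟩ := h2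
      have hc := Finset.card_erase_add_one hw
      rw [Finset.sum_comm, ← Finset.add_sum_erase _ _ hw, ← Finset.card_filter,
        Finset.sum_comm] at h
      obtain ⟨A', hA', W', hW', h2⟩ := ih (A.card + (W.erase w).card) (by omega) A (W.erase w)
        (by rw [← hc] at h; nlinarith) rfl
      exact ⟨A', hA', W', hW'.trans (Finset.erase_subset _ _), h2⟩
    push Not at h1 h2
    refine ⟨A, subset_rfl, W, subset_rfl, ?_, h1, h2⟩
    rw [Finset.nonempty_iff_ne_empty]
    rintro rfl
    simp at h

/-- One leg: a path of length `q` ending in `A`, alternating between `A` and `W` and avoiding a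
small set `B`. The parity of `q` decides on which side the path starts. -/
lemma exists_leg (G : SimpleGraph V) [DecidableRel G.Adj] (D : ℕ) (A W : Finset V)
    (hA : ∀ a ∈ A, D ≤ (W.filter (G.Adj a)).card)
    (hW : ∀ w ∈ W, D ≤ (A.filter (fun a => G.Adj a w)).card) (q : ℕ) :
    ∀ (r : V) (B : Finset V), B.card + q < D → r ∈ (if Even q then A else W) →
      ∃ l : List V, l.length = q ∧ List.IsChain G.Adj (r :: l) ∧ (r :: l).Nodup ∧
        (∀ x ∈ l, x ∉ B ∧ x ∈ A ∪ W) ∧ (r :: l).getLast (List.cons_ne_nil _ _) ∈ A := by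
  induction q with
  | zero => intro r B _ hr; exact ⟨[], by simpa using hr⟩
  | succ q ih =>
    intro r B hB hr
    have hcard : (insert r B).card ≤ B.card + 1 := Finset.card_insert_le _ _
    obtain ⟨r', hr', hadj, hnot⟩ : ∃ r' ∈ (if Even q then A else W), G.Adj r r' ∧
        r' ∉ insert r B := by
      by_cases hq : Even q
      · have hq' : ¬ Even (q + 1) := by simpa [Nat.even_add_one] using hq
        simp only [hq', if_false] at hr
        obtain ⟨x, hx, hx'⟩ := Finset.exists_mem_notMem_of_card_lt_card
          (lt_of_lt_of_le (by omega : (insert r B).card < D) (hW r hr))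
        rw [Finset.mem_filter] at hx
        exact ⟨x, by simpa [hq] using hx.1, hx.2.symm, hx'⟩
      · have hq' : Even (q + 1) := by simpa [Nat.even_add_one] using hq
        simp only [hq', if_true] at hr
        obtain ⟨x, hx, hx'⟩ := Finset.exists_mem_notMem_of_card_lt_card
          (lt_of_lt_of_le (by omega : (insert r B).card < D) (hA r hr))
        rw [Finset.mem_filter] at hx
        exact ⟨x, by simpa [hq] using hx.1, hx.2, hx'⟩
    obtain ⟨l, hl, hch, hnd, hav, hlast⟩ := ih r' (insert r B) (by omega) hr'
    have hmem : r' ∈ A ∪ W := by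
      split_ifs at hr' <;> simp [hr']
    simp only [Finset.mem_insert, not_or] at hnot hav
    refine ⟨r' :: l, by simp [hl], by simp [hadj, hch], ?_, ?_, by simpa using hlast⟩
    · rw [List.nodup_cons]
      refine ⟨?_, hnd⟩
      rw [List.mem_cons, not_or]
      exact ⟨fun h => hnot.1 h.symm, fun h => (hav r h).1.1 rfl⟩
    · intro x hx
      rcases List.mem_cons.1 hx with rfl | hx
      · exact ⟨hnot.2, hmem⟩
      · exact ⟨(hav x hx).1.2, (hav x hx).2⟩

/-- The vertex set of the spider with root `s.1` and legs `s.2 e`. -/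
def spiderVerts {ι : Type*} [Fintype ι] (s : V × (ι → List V)) : Finset V :=
  insert s.1 (Finset.univ.biUnion fun e => (s.2 e).toFinset)

/-- The endpoint of the leg `e` of a spider; it is the root if the leg has length `0`. -/
def spiderLeaf {ι : Type*} (s : V × (ι → List V)) (e : ι) : V :=
  (s.1 :: s.2 e).getLast (List.cons_ne_nil _ _)

/-- `s` is a spider in `G` whose legs have length `q`, are disjoint apart from the root, and end
in `A`. -/
def IsSpider {ι : Type*} (G : SimpleGraph V) (q : ℕ) (A : Finset V)
    (s : V × (ι → List V)) : Prop :=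
  (∀ e, (s.2 e).length = q ∧ List.IsChain G.Adj (s.1 :: s.2 e) ∧ (s.1 :: s.2 e).Nodup ∧
    spiderLeaf s e ∈ A) ∧
  ∀ e e', e ≠ e' → List.Disjoint (s.2 e) (s.2 e')

lemma card_spiderVerts_le {ι : Type*} [Fintype ι] {G : SimpleGraph V} {q : ℕ} {A : Finset V}
    {s : V × (ι → List V)} (h : IsSpider G q A s) :
    (spiderVerts s).card ≤ 1 + Fintype.card ι * q := by
  refine (Finset.card_insert_le _ _).trans ?_
  rw [add_comm]
  refine Nat.add_le_add_left (Finset.card_biUnion_le_card_mul _ _ _ fun e _ => ?_) 1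
  exact (List.toFinset_card_le _).trans (h.1 e).1.le

lemma spiderLeaf_mem {ι : Type*} [Fintype ι] (s : V × (ι → List V)) (e : ι) :
    spiderLeaf s e ∈ spiderVerts s := by
  have h := List.getLast_mem (List.cons_ne_nil s.1 (s.2 e))
  rcases List.mem_cons.1 h with h | h
  · exact Finset.mem_insert.2 (Or.inl h)
  · exact Finset.mem_insert_of_mem
      (Finset.mem_biUnion.2 ⟨e, Finset.mem_univ _, List.mem_toFinset.2 h⟩)

/-- The legs of a spider are found one after the other, avoiding the earlier ones. -/
lemma exists_spider {ι : Type*} [Fintype ι] [DecidableEq ι] (G : SimpleGraph V)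
    [DecidableRel G.Adj] (D q : ℕ) (A W : Finset V) (hne : A.Nonempty)
    (hA : ∀ a ∈ A, D ≤ (W.filter (G.Adj a)).card)
    (hW : ∀ w ∈ W, D ≤ (A.filter (fun a => G.Adj a w)).card)
    (hD : Fintype.card ι * q + q < D) :
    ∃ s : V × (ι → List V), IsSpider G q A s ∧ ∀ x ∈ spiderVerts s, x ∈ A ∪ W := by
  obtain ⟨r, hr⟩ : ∃ r, r ∈ (if Even q then A else W) := by
    obtain ⟨a, ha⟩ := hne
    split_ifs
    · exact ⟨a, ha⟩
    · have : 0 < (W.filter (G.Adj a)).card := lt_of_lt_of_le (by omega) (hA a ha)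
      obtain ⟨w, hw⟩ := Finset.card_pos.1 this
      exact ⟨w, (Finset.mem_filter.1 hw).1⟩
  obtain ⟨g, hg, hgd⟩ := exists_greedy (ι := ι)
    (fun _ l => l.length = q ∧ List.IsChain G.Adj (r :: l) ∧ (r :: l).Nodup ∧
        (∀ x ∈ l, x ∈ A ∪ W) ∧ (r :: l).getLast (List.cons_ne_nil _ _) ∈ A)
    (fun l l' : List V => List.Disjoint l l') (fun _ _ h => h.symm) (by
      intro S g hg e _
      have hB : (S.biUnion fun e => (g e).toFinset).card ≤ Fintype.card ι * q := by
        refine (Finset.card_biUnion_le_card_mul _ _ q fun e he => ?_).trans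
          (Nat.mul_le_mul_right _ (Finset.card_le_univ S))
        exact (List.toFinset_card_le _).trans (hg e he).1.le
      obtain ⟨l, h1, h2, h3, h4, h5⟩ := exists_leg G D A W hA hW q r
        (S.biUnion fun e => (g e).toFinset) (by omega) hr
      refine ⟨l, ⟨h1, h2, h3, fun x hx => (h4 x hx).2, h5⟩, ?_⟩
      intro i hi x hx hx'
      exact (h4 x hx).1 (Finset.mem_biUnion.2 ⟨i, hi, List.mem_toFinset.2 hx'⟩))
  refine ⟨(r, g), ⟨fun e => ⟨(hg e).1, (hg e).2.1, (hg e).2.2.1, (hg e).2.2.2.2⟩, hgd⟩, ?_⟩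
  intro x hx
  rcases Finset.mem_insert.1 hx with rfl | hx
  · split_ifs at hr <;> simp [hr]
  · obtain ⟨e, _, he⟩ := Finset.mem_biUnion.1 hx
    exact (hg e).2.2.2.1 x (List.mem_toFinset.1 he)

/-! ### Linked spiders and the subdivision -/

/-- Spiders `g 0, …, g (t-1)` that are vertex-disjoint and whose leaves are mutually linked. The
relation `Lk` holds for almost all pairs of `A`, so after removing few vertices from `A` every
remaining one is linked to all leaves chosen so far; what remains of the bipartite graph between
`A` and `W` is still dense, hence contains a further spider. -/
lemma exists_linked_spiders {ι : Type*} [Fintype ι] [DecidableEq ι] (G : SimpleGraph V)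
    [DecidableRel G.Adj] (Lk : V → V → Prop) [DecidableRel Lk] (hLk : ∀ x y, Lk x y → Lk y x)
    (t D q M : ℕ) (A W : Finset V)
    (hD : Fintype.card ι * q + q < D)
    (hM : ∀ a ∈ A, M + t * (1 + Fintype.card ι * q) + D + 1 ≤ (W.filter (G.Adj a)).card)
    (hW : 2 * D * W.card ≤ M * A.card)
    (hU : 64 * (t * Fintype.card ι + 1) * ∑ x ∈ A, (A.filter (fun y => ¬ Lk x y)).card
      ≤ A.card ^ 2)
    (hbig : 4 * (t * (1 + Fintype.card ι * q)) ≤ A.card) (hpos : 0 < A.card) :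
    ∃ g : Fin t → V × (ι → List V), (∀ j, IsSpider G q A (g j)) ∧
      ∀ i j, i ≠ j → Disjoint (spiderVerts (g i)) (spiderVerts (g j)) ∧
        ∀ e e', Lk (spiderLeaf (g i) e) (spiderLeaf (g j) e') := by
  set T := t * Fintype.card ι + 1 with hT
  set N := t * (1 + Fintype.card ι * q) with hN
  set u : V → ℕ := fun x => (A.filter (fun y => ¬ Lk x y)).card with hu
  -- roots and leaves are only taken from `A0`, the vertices unlinked to few others; at most an
  -- eighth of `A` is lost
  set A0 := A.filter (fun x => 8 * T * u x ≤ A.card) with hA0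
  set high := A.filter (fun x => ¬ 8 * T * u x ≤ A.card) with hhigh
  have hsplit : A0.card + high.card = A.card := Finset.card_filter_add_card_filter_not _
  have hhighcard : 8 * high.card ≤ A.card := by
    have h1 : high.card * A.card ≤ ∑ x ∈ high, 8 * T * u x := by
      rw [← smul_eq_mul]
      exact Finset.card_nsmul_le_sum _ _ _ fun x hx =>
        (not_le.1 (Finset.mem_filter.1 hx).2).le
    have h2 : ∑ x ∈ high, 8 * T * u x ≤ 8 * T * ∑ x ∈ A, u x := by
      rw [Finset.mul_sum]
      exact Finset.sum_le_sum_of_subset (Finset.filter_subset _ _)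
    have h3 : 8 * high.card * A.card ≤ A.card * A.card := by nlinarith
    exact Nat.le_of_mul_le_mul_right h3 hpos
  obtain ⟨x0, hx0⟩ := Finset.card_pos.1 hpos
  have : Nonempty (V × (ι → List V)) := ⟨(x0, fun _ => [])⟩
  obtain ⟨g, hg, hgR⟩ := exists_greedy (ι := Fin t) (α := V × (ι → List V))
    (fun _ s => IsSpider G q A0 s)
    (fun s s' => Disjoint (spiderVerts s) (spiderVerts s') ∧
        ∀ e e', Lk (spiderLeaf s e) (spiderLeaf s' e'))
    (fun s s' h => ⟨h.1.symm, fun e e' => hLk _ _ (h.2 e' e)⟩) (by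
      intro S g hg j _
      have hS : S.card ≤ t := by simpa using Finset.card_le_univ S
      set used := S.biUnion fun i => spiderVerts (g i) with hused
      set far := S.biUnion fun i => Finset.univ.biUnion fun e =>
        A.filter (fun y => ¬ Lk (spiderLeaf (g i) e) y) with hfar
      have husedcard : used.card ≤ N :=
        (Finset.card_biUnion_le_card_mul _ _ _ fun i hi => card_spiderVerts_le (hg i hi)).trans
          (Nat.mul_le_mul_right _ hS)
      have hfarcard : 8 * far.card ≤ A.card := by
        have h1 : far.card ≤ S.card * (Fintype.card ι * (A.card / (8 * T))) := by
          refine Finset.card_biUnion_le_card_mul _ _ _ fun i hi => ?_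
          refine Finset.card_biUnion_le_card_mul _ _ _ fun e _ => ?_
          have := (Finset.mem_filter.1 ((hg i hi).1 e).2.2.2).2
          rw [Nat.le_div_iff_mul_le (by omega), mul_comm]
          exact this
        have h2 : S.card * (Fintype.card ι * (A.card / (8 * T))) ≤ T * (A.card / (8 * T)) := by
          rw [← mul_assoc]
          refine Nat.mul_le_mul_right _ ?_
          have := Nat.mul_le_mul_right (Fintype.card ι) hS
          omega
        have h3 := Nat.div_mul_le_self A.card (8 * T)
        nlinarith
      -- at least half of `A` remains, and each remaining vertex still has more than `M + D`
      -- neighbours in `W1`, which is enough edges for a part of minimum degree `D`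
      set A1 := (A0 \ used) \ far with hA1
      set W1 := W \ used with hW1
      have hA1A : A1 ⊆ A0 := Finset.sdiff_subset.trans Finset.sdiff_subset
      have hA1card : A.card ≤ 2 * A1.card := by
        have h1 := Finset.le_card_sdiff used A0
        have h2 := Finset.le_card_sdiff far (A0 \ used)
        have h3 : A1.card = ((A0 \ used) \ far).card := rfl
        omega
      have hedges : D * (A1.card + W1.card) < ∑ a ∈ A1, ∑ w ∈ W1, if G.Adj a w then 1 else 0 := by
        have h1 : A1.card * (M + D + 1) ≤ ∑ a ∈ A1, ∑ w ∈ W1, if G.Adj a w then 1 else 0 := by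
          rw [← smul_eq_mul]
          refine Finset.card_nsmul_le_sum _ _ _ fun a ha => ?_
          rw [← Finset.card_filter]
          have h2 := hM a ((Finset.mem_filter.1 (hA1A ha)).1)
          have h3 := Finset.le_card_sdiff used (W.filter (G.Adj a))
          have h4 : (W.filter (G.Adj a)) \ used = W1.filter (G.Adj a) := by
            ext x; simp [hW1]; tauto
          rw [h4] at h3
          exact le_trans (b := (W1.filter (G.Adj a)).card) (by omega) le_rfl
        have h2 : W1.card ≤ W.card := Finset.card_le_card Finset.sdiff_subset
        have h3 : 2 * D * W1.card ≤ M * (2 * A1.card) :=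
          (Nat.mul_le_mul_left _ h2).trans (hW.trans (Nat.mul_le_mul_left _ hA1card))
        have h4 : 0 < A1.card := by omega
        nlinarith
      obtain ⟨A', hA', W', hW', hne, hdA, hdW⟩ := exists_minDegree_sub G.Adj D A1 W1 hedges
      obtain ⟨s, hs, hsv⟩ := exists_spider (ι := ι) G D q A' W' hne hdA hdW hD
      refine ⟨s, ⟨fun e => ⟨(hs.1 e).1, (hs.1 e).2.1, (hs.1 e).2.2.1, ?_⟩, hs.2⟩, ?_⟩
      · exact hA1A (hA' (hs.1 e).2.2.2)
      · intro i hi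
        constructor
        · rw [Finset.disjoint_left]
          intro x hx hxi
          have hxu : x ∈ used := Finset.mem_biUnion.2 ⟨i, hi, hxi⟩
          rcases Finset.mem_union.1 (hsv x hx) with h | h
          · exact (Finset.mem_sdiff.1 (Finset.mem_sdiff.1 (hA' h)).1).2 hxu
          · exact (Finset.mem_sdiff.1 (hW' h)).2 hxu
        · intro e e'
          have h1 := hA' (hs.1 e).2.2.2
          have h2 := (Finset.mem_sdiff.1 h1).2
          by_contra hcon
          refine h2 (Finset.mem_biUnion.2 ⟨i, hi, Finset.mem_biUnion.2 ⟨e', Finset.mem_univ _,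
            Finset.mem_filter.2 ⟨(Finset.mem_filter.1 (hA1A h1)).1, fun h => hcon (hLk _ _ h)⟩⟩⟩))
  refine ⟨g, fun j => ⟨fun e => ?_, (hg j).2⟩, hgR⟩
  have h := (hg j).1 e
  exact ⟨h.1, h.2.1, h.2.2.1, (Finset.mem_filter.1 h.2.2.2).1⟩

/-- Joining the leaves of linked spiders by paths of length `p + 1` avoiding everything used so far
produces the subdivision: the branch vertices are the roots, and the leg used at both ends of an edge `e`
is the one indexed by `e`. -/
lemma contains_of_linked_spiders {t q p : ℕ} {m : Fin t → Fin t → ℕ} (hirr : ∀ a, m a a = 0)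
    (G : SimpleGraph V) (Lk : V → V → Prop) (A : Finset V) (N : ℕ)
    (hlink : ∀ x y, Lk x y → x ≠ y → ∀ B : Finset V, x ∈ B → y ∈ B → B.card ≤ N →
      ∃ l : List V, l.length = p ∧ List.IsChain G.Adj (x :: (l ++ [y])) ∧ l.Nodup ∧
        ∀ w ∈ l, w ∉ B)
    (hN : t * (1 + Fintype.card (EdgeIdx m) * q) +
      Fintype.card (EdgeIdx m) * p ≤ N)
    (g : Fin t → V × (EdgeIdx m → List V))
    (hg : ∀ j, IsSpider G q A (g j))
    (hgR : ∀ i j, i ≠ j → Disjoint (spiderVerts (g i)) (spiderVerts (g j)) ∧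
        ∀ e e', Lk (spiderLeaf (g i) e) (spiderLeaf (g j) e')) :
    ContainsMultiSubdiv G t m (q + p + q + 1) := by
  have hne : ∀ e : EdgeIdx m, e.1.1 ≠ e.1.2 := by
    rintro ⟨⟨a, b⟩, c⟩ h
    dsimp only at h
    subst h
    have hc := c.2
    simp [hirr] at hc
  set U := Finset.univ.biUnion fun j => spiderVerts (g j) with hU
  have hUcard : U.card ≤ t * (1 + Fintype.card (EdgeIdx m) * q) := by
    simpa using Finset.card_biUnion_le_card_mul Finset.univ (fun j => spiderVerts (g j)) _
      fun j _ => card_spiderVerts_le (hg j)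
  have hmemU : ∀ j x, x ∈ spiderVerts (g j) → x ∈ U :=
    fun j x hx => Finset.mem_biUnion.2 ⟨j, Finset.mem_univ _, hx⟩
  have hroot : ∀ j, (g j).1 ∈ spiderVerts (g j) := fun j => Finset.mem_insert_self _ _
  have hleg : ∀ j e x, x ∈ (g j).2 e → x ∈ spiderVerts (g j) := fun j e x hx =>
    Finset.mem_insert_of_mem (Finset.mem_biUnion.2 ⟨e, Finset.mem_univ _, List.mem_toFinset.2 hx⟩)
  have hdj : ∀ i j x, x ∈ spiderVerts (g i) → x ∈ spiderVerts (g j) → i = j := by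
    intro i j x hi hj
    by_contra h
    exact Finset.disjoint_left.1 (hgR i j h).1 hi hj
  obtain ⟨mid, hmid, hmidd⟩ := exists_greedy (ι := EdgeIdx m) (α := List V)
    (fun e l => l.length = p ∧
      List.IsChain G.Adj (spiderLeaf (g e.1.1) e :: (l ++ [spiderLeaf (g e.1.2) e])) ∧ l.Nodup ∧
        ∀ w ∈ l, w ∉ U)
    (fun l l' => List.Disjoint l l') (fun _ _ h => h.symm) (by
      intro S f hf e _
      have hB : (U ∪ S.biUnion fun e => (f e).toFinset).card ≤ N := by
        refine (Finset.card_union_le _ _).trans (le_trans (add_le_add hUcard ?_) hN)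
        refine (Finset.card_biUnion_le_card_mul _ _ p fun e he => ?_).trans
          (Nat.mul_le_mul_right _ (Finset.card_le_univ S))
        exact (List.toFinset_card_le _).trans (hf e he).1.le
      obtain ⟨l, h1, h2, h3, h4⟩ := hlink (spiderLeaf (g e.1.1) e) (spiderLeaf (g e.1.2) e)
        ((hgR _ _ (hne e)).2 e e)
        (fun h => hne e (hdj _ _ _ (spiderLeaf_mem (g e.1.1) e) (h ▸ spiderLeaf_mem (g e.1.2) e)))
        (U ∪ S.biUnion fun e => (f e).toFinset)
        (Finset.mem_union_left _ (hmemU _ _ (spiderLeaf_mem _ _)))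
        (Finset.mem_union_left _ (hmemU _ _ (spiderLeaf_mem _ _))) hB
      refine ⟨l, ⟨h1, h2, h3, fun w hw hwU => h4 w hw (Finset.mem_union_left _ hwU)⟩, ?_⟩
      intro i hi x hx hx'
      exact h4 x hx (Finset.mem_union_right _
        (Finset.mem_biUnion.2 ⟨i, hi, List.mem_toFinset.2 hx'⟩)))
  have hnotroot : ∀ j e d, (g d).1 ∉ (g j).2 e := by
    intro j e d h
    obtain rfl := hdj _ _ _ (hleg j e _ h) (hroot d)
    exact (List.nodup_cons.1 ((hg j).1 e).2.2.1).1 h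
  refine containsMultiSubdiv_of_lists G (fun j => (g j).1) ?_
    (fun e => (g e.1.1).2 e ++ mid e ++ ((g e.1.2).2 e).reverse) ?_ ?_ ?_ ?_ ?_
  · intro i j h
    refine hdj i j (g i).1 (hroot i) ?_
    have h' : (g i).1 = (g j).1 := h
    rw [h']
    exact hroot j
  · intro e
    simp [((hg _).1 e).1, (hmid e).1, add_assoc]
  · intro e
    have hc := (hmid e).2.1
    have heq : (g e.1.1).1 :: ((g e.1.1).2 e ++ mid e ++ ((g e.1.2).2 e).reverse ++ [(g e.1.2).1])
        = ((g e.1.1).1 :: (g e.1.1).2 e) ++ (mid e ++ ((g e.1.2).1 :: (g e.1.2).2 e).reverse) := by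
      simp
    rw [heq]
    have hx : ∀ j, ((g j).1 :: (g j).2 e).getLast? = some (spiderLeaf (g j) e) := fun j =>
      List.getLast?_eq_getLast_of_ne_nil _
    have h1 : (mid e ++ ((g e.1.2).1 :: (g e.1.2).2 e).reverse).head? =
        (mid e ++ [spiderLeaf (g e.1.2) e]).head? := by
      rw [List.head?_append, List.head?_append, List.head?_reverse, hx]; rfl
    have hrev : List.IsChain G.Adj ((g e.1.2).1 :: (g e.1.2).2 e).reverse := by
      rw [List.isChain_reverse]
      exact ((hg e.1.2).1 e).2.1.imp fun a b h => h.symm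
    rw [List.isChain_cons] at hc
    rw [List.isChain_append, List.isChain_append, h1, hx, List.head?_reverse, hx]
    refine ⟨((hg e.1.1).1 e).2.1, ⟨(List.isChain_append.1 hc.2).1, hrev, ?_⟩, ?_⟩
    · simpa using (List.isChain_append.1 hc.2).2.2
    · rintro x hx y hy
      obtain rfl : spiderLeaf (g e.1.1) e = x := by simpa using hx
      exact hc.1 y hy
  · intro e
    have n1 := (List.nodup_cons.1 ((hg e.1.1).1 e).2.2.1).2
    have n2 := (List.nodup_cons.1 ((hg e.1.2).1 e).2.2.1).2
    have h4 := (hmid e).2.2.2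
    rw [List.nodup_append, List.nodup_append]
    refine ⟨⟨n1, (hmid e).2.2.1, ?_⟩, List.nodup_reverse.2 n2, ?_⟩
    · rintro x hx y hy rfl
      exact h4 x hy (hmemU _ _ (hleg _ _ _ hx))
    · rintro x hx y hy rfl
      rw [List.mem_reverse] at hy
      rcases List.mem_append.1 hx with hx | hx
      · exact hne e (hdj _ _ _ (hleg _ _ _ hx) (hleg _ _ _ hy))
      · exact h4 x hx (hmemU _ _ (hleg _ _ _ hy))
  · intro e d h
    simp only [List.mem_append, List.mem_reverse] at h
    rcases h with (h | h) | h
    · exact hnotroot _ _ _ h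
    · exact (hmid e).2.2.2 _ h (hmemU _ _ (hroot d))
    · exact hnotroot _ _ _ h
  · intro e e' hee x hx hx'
    have hll : ∀ i j, x ∈ (g i).2 e → x ∈ (g j).2 e' → False := by
      intro i j hi hj
      obtain rfl := hdj _ _ _ (hleg _ _ _ hi) (hleg _ _ _ hj)
      exact (hg i).2 e e' hee hi hj
    have hlm : ∀ e e' i, x ∈ (g i).2 e → x ∈ mid e' → False := fun e e' i hi hm =>
      (hmid e').2.2.2 _ hm (hmemU _ _ (hleg _ _ _ hi))
    simp only [List.mem_append, List.mem_reverse] at hx hx'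
    rcases hx with (hx | hx) | hx <;> rcases hx' with (hx' | hx') | hx'
    · exact hll _ _ hx hx'
    · exact hlm _ _ _ hx hx'
    · exact hll _ _ hx hx'
    · exact hlm _ _ _ hx' hx
    · exact hmidd e e' hee hx hx'
    · exact hlm _ _ _ hx' hx
    · exact hll _ _ hx hx'
    · exact hlm _ _ _ hx hx'
    · exact hll _ _ hx hx'

/-! ### Counting admissible paths -/

lemma fBound_mono {L : ℝ} (hL : 1 ≤ L) {i j : ℕ} (h : i ≤ j) : fBound i L ≤ fBound j L :=
  pow_le_pow_right₀ hL (Nat.pow_le_pow_right (by norm_num) h)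

lemma padSeq_finite (ℓ : ℕ) : {q : ℕ → V | PadSeq ℓ q}.Finite := by
  refine Set.Finite.of_injOn (f := fun q => fun i : Fin (ℓ + 1) => q i) (Set.mapsTo_univ _ _)
    ?_ Set.finite_univ
  intro q hq q' hq' h
  have h' : ∀ i, i ≤ ℓ → q i = q' i := fun i hi => congrFun h ⟨i, by omega⟩
  funext i
  rcases le_total i ℓ with hi | hi
  · exact h' i hi
  · rw [hq i hi, hq' i hi, h' ℓ le_rfl]

/-- The `L`-admissible paths of length `ℓ` from `x` to `y`, as padded sequences. -/
noncomputable def admF (G : SimpleGraph V) (L : ℝ) (ℓ : ℕ) (x y : V) : Finset (ℕ → V) :=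
  ((padSeq_finite ℓ).subset (fun _ hq => hq.2.2.1) :
    {q : ℕ → V | q 0 = x ∧ q ℓ = y ∧ PadSeq ℓ q ∧ Admissible G L ℓ q}.Finite).toFinset

lemma mem_admF {G : SimpleGraph V} {L : ℝ} {ℓ : ℕ} {x y : V} {q : ℕ → V} :
    q ∈ admF G L ℓ x y ↔ q 0 = x ∧ q ℓ = y ∧ PadSeq ℓ q ∧ Admissible G L ℓ q := by
  simp [admF]

lemma good_iff {G : SimpleGraph V} {L : ℝ} {ℓ : ℕ} {p : ℕ → V} :
    Good G L ℓ p ↔ Admissible G L ℓ p ∧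
      ((admF G L ℓ (p 0) (p ℓ)).card : ℝ) ≤ fBound ℓ L := by
  rw [Good, admF, ← Set.ncard_eq_toFinset_card _
    ((padSeq_finite ℓ).subset (fun _ hq => hq.2.2.1))]
  rfl

/-- Goodness and admissibility in length `ℓ` depend only on the first `ℓ + 1` vertices. -/
lemma good_admissible_congr {G : SimpleGraph V} {L : ℝ} (ℓ : ℕ) :
    ∀ p p' : ℕ → V, (∀ i, i ≤ ℓ → p i = p' i) →
      (Good G L ℓ p → Good G L ℓ p') ∧ (Admissible G L ℓ p → Admissible G L ℓ p') := by
  induction ℓ using Nat.strong_induction_on with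
  | _ ℓ ih =>
    intro p p' h
    have hadm : Admissible G L ℓ p → Admissible G L ℓ p' := by
      rintro ⟨⟨h1, h2⟩, h3⟩
      refine ⟨⟨?_, ?_⟩, ?_⟩
      · intro i hi
        rw [← h i hi.le, ← h (i + 1) hi]
        exact h1 i hi
      · intro i j hij hj
        rw [← h i (by omega), ← h j hj]
        exact h2 i j hij hj
      · intro i j hij hj hne
        exact (ih (j - i) (by omega) _ _ (fun a ha => h (i + a) (by omega))).1 (h3 i j hij hj hne)
    refine ⟨fun hg => ?_, hadm⟩
    rw [good_iff] at hg ⊢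
    rw [← h 0 (Nat.zero_le _), ← h ℓ le_rfl]
    exact ⟨hadm hg.1, hg.2⟩

lemma Admissible.good_prefix {G : SimpleGraph V} {L : ℝ} {ℓ i : ℕ} {q : ℕ → V}
    (h : Admissible G L ℓ q) (h0 : 0 < i) (hi : i < ℓ) : Good G L i q := by
  simpa using h.2 0 i h0 hi.le (by omega)

lemma Admissible.good_suffix {G : SimpleGraph V} {L : ℝ} {ℓ i : ℕ} {q : ℕ → V}
    (h : Admissible G L ℓ q) (h0 : 0 < i) (hi : i < ℓ) :
    Good G L (ℓ - i) (fun a => q (i + a)) :=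
  h.2 i ℓ hi le_rfl (by omega)

/-- An admissible path is determined by its two parts before and after the `i`-th vertex. -/
lemma card_admF_filter_le (G : SimpleGraph V) (L : ℝ) {ℓ i : ℕ} (x y w : V) (h0 : 0 < i)
    (hi : i < ℓ) : ((admF G L ℓ x y).filter (fun q => q i = w)).card ≤
      (admF G L i x w).card * (admF G L (ℓ - i) w y).card := by
  rw [← Finset.card_product]
  refine Finset.card_le_card_of_injOn (fun q => (fun a => q (min a i), fun a => q (i + a))) ?_ ?_
  · intro q hq
    obtain ⟨hq, hqi⟩ := Finset.mem_filter.1 hq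
    obtain ⟨hq0, hqℓ, hpad, hadm⟩ := mem_admF.1 hq
    refine Finset.mem_coe.2 (Finset.mem_product.2 ⟨mem_admF.2 ⟨?_, ?_, ?_, ?_⟩,
      mem_admF.2 ⟨?_, ?_, ?_, ?_⟩⟩)
    · simpa using hq0
    · simpa using hqi
    · intro a ha
      simp [ha]
    · refine (good_admissible_congr i q _ fun a ha => ?_).2 (good_iff.1 (hadm.good_prefix h0 hi)).1
      simp [ha]
    · simpa using hqi
    · simpa [Nat.add_sub_cancel' hi.le] using hqℓ
    · intro a ha
      dsimp only
      rw [hpad _ (by omega), hpad (i + (ℓ - i)) (by omega)]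
    · exact (good_iff.1 (hadm.good_suffix h0 hi)).1
  · intro q hq q' hq' h
    simp only [Prod.mk.injEq] at h
    funext a
    rcases le_total a i with ha | ha
    · simpa [ha] using congrFun h.1 a
    · simpa [Nat.add_sub_cancel' ha] using congrFun h.2 (a - i)

lemma card_admF_prefix_le {G : SimpleGraph V} {L : ℝ} {ℓ i : ℕ} {x y w : V} {q : ℕ → V}
    (hq : q ∈ (admF G L ℓ x y).filter (fun q => q i = w)) (h0 : 0 < i) (hi : i < ℓ) :
    ((admF G L i x w).card : ℝ) ≤ fBound i L := by
  obtain ⟨hq', rfl⟩ := Finset.mem_filter.1 hq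
  obtain ⟨rfl, -, -, hadm⟩ := mem_admF.1 hq'
  exact (good_iff.1 (hadm.good_prefix h0 hi)).2

lemma card_admF_suffix_le {G : SimpleGraph V} {L : ℝ} {ℓ i : ℕ} {x y w : V} {q : ℕ → V}
    (hq : q ∈ (admF G L ℓ x y).filter (fun q => q i = w)) (h0 : 0 < i) (hi : i < ℓ) :
    ((admF G L (ℓ - i) w y).card : ℝ) ≤ fBound (ℓ - i) L := by
  obtain ⟨hq', rfl⟩ := Finset.mem_filter.1 hq
  obtain ⟨-, rfl, -, hadm⟩ := mem_admF.1 hq'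
  simpa [Nat.add_sub_cancel' hi.le] using (good_iff.1 (hadm.good_suffix h0 hi)).2

lemma card_admF_one_le (G : SimpleGraph V) (L : ℝ) (x y : V) : (admF G L 1 x y).card ≤ 1 := by
  rw [Finset.card_le_one]
  intro q hq q' hq'
  obtain ⟨h0, h1, hp, -⟩ := mem_admF.1 hq
  obtain ⟨hq0, hq1, hp', -⟩ := mem_admF.1 hq'
  funext i
  rcases Nat.eq_zero_or_pos i with rfl | hi
  · rw [h0, hq0]
  · rw [hp i hi, hp' i hi, h1, hq1]

/-- Few admissible paths pass through a given vertex at a given interior position. -/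
lemma card_admF_filter_le_sq (G : SimpleGraph V) {L : ℝ} (hL : 1 ≤ L) {ℓ i : ℕ} (x y w : V)
    (h0 : 0 < i) (hi : i < ℓ) :
    (((admF G L ℓ x y).filter (fun q => q i = w)).card : ℝ) ≤ fBound (ℓ - 1) L ^ 2 := by
  rcases Finset.eq_empty_or_nonempty ((admF G L ℓ x y).filter (fun q => q i = w)) with h | ⟨q, hq⟩
  · rw [h]; simp [sq_nonneg]
  · have h1 := (card_admF_prefix_le hq h0 hi).trans (fBound_mono hL (by omega : i ≤ ℓ - 1))
    have h2 := (card_admF_suffix_le hq h0 hi).trans (fBound_mono hL (by omega : ℓ - i ≤ ℓ - 1))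
    have h3 : (((admF G L ℓ x y).filter (fun q => q i = w)).card : ℝ) ≤
        (admF G L i x w).card * (admF G L (ℓ - i) w y).card := by
      exact_mod_cast card_admF_filter_le G L x y w h0 hi
    rw [sq]
    exact h3.trans (mul_le_mul h1 h2 (Nat.cast_nonneg _) ((Nat.cast_nonneg _).trans h1))

lemma card_admF_filter_first_le (G : SimpleGraph V) {L : ℝ} (hL : 1 ≤ L) {ℓ : ℕ} (hℓ : 2 ≤ ℓ)
    (x y w : V) :
    (((admF G L ℓ x y).filter (fun q => q 1 = w)).card : ℝ) ≤ fBound (ℓ - 1) L := by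
  rcases Finset.eq_empty_or_nonempty ((admF G L ℓ x y).filter (fun q => q 1 = w)) with h | ⟨q, hq⟩
  · rw [h]; simp [fBound]; positivity
  · refine le_trans ?_ (card_admF_suffix_le hq one_pos (by omega))
    have h3 := card_admF_filter_le G L x y w one_pos (by omega : 1 < ℓ)
    have h4 := Nat.mul_le_mul_right (admF G L (ℓ - 1) w y).card (card_admF_one_le G L x w)
    exact_mod_cast h3.trans (by simpa using h4)

lemma card_admF_filter_last_le (G : SimpleGraph V) {L : ℝ} (hL : 1 ≤ L) {ℓ : ℕ} (hℓ : 2 ≤ ℓ)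
    (x y w : V) :
    (((admF G L ℓ x y).filter (fun q => q (ℓ - 1) = w)).card : ℝ) ≤ fBound (ℓ - 1) L := by
  rcases Finset.eq_empty_or_nonempty ((admF G L ℓ x y).filter (fun q => q (ℓ - 1) = w))
    with h | ⟨q, hq⟩
  · rw [h]; simp [fBound]; positivity
  · refine le_trans ?_ (card_admF_prefix_le hq (by omega) (by omega))
    have h3 := card_admF_filter_le G L x y w (by omega : 0 < ℓ - 1) (by omega : ℓ - 1 < ℓ)
    have h4 := card_admF_one_le G L w y
    have h5 : ℓ - (ℓ - 1) = 1 := by omega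
    rw [h5] at h3
    have h6 := Nat.mul_le_mul_left (admF G L (ℓ - 1) x w).card h4
    exact_mod_cast h3.trans (by simpa using h6)

lemma Bad.lt_card {G : SimpleGraph V} {L : ℝ} {ℓ : ℕ} {x y : V} (h : Bad G L ℓ x y) :
    fBound ℓ L < (admF G L ℓ x y).card := by
  obtain ⟨p, rfl, rfl, hadm, hng⟩ := h
  by_contra hc
  exact hng (good_iff.2 ⟨hadm, not_lt.1 hc⟩)

/-- The endpoints of the paths of length `i` starting at `c`. -/
noncomputable def endpts (G : SimpleGraph V) (i : ℕ) (c : V) : Finset V := by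
  classical
  exact Finset.univ.filter fun y => ∃ p : ℕ → V, PathSeq G i p ∧ p 0 = c ∧ p i = y

lemma mem_endpts {G : SimpleGraph V} {i : ℕ} {c y : V} :
    y ∈ endpts G i c ↔ ∃ p : ℕ → V, PathSeq G i p ∧ p 0 = c ∧ p i = y := by
  simp [endpts]

lemma card_endpts_le (G : SimpleGraph V) [DecidableRel G.Adj] (Δ : ℕ)
    (hΔ : ∀ v, (Finset.univ.filter (G.Adj v)).card ≤ Δ) (i : ℕ) (c : V) :
    (endpts G i c).card ≤ Δ ^ i := by
  induction i with
  | zero =>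
    rw [pow_zero, Finset.card_le_one]
    intro x hx y hy
    obtain ⟨p, -, h1, h2⟩ := mem_endpts.1 hx
    obtain ⟨p', -, h1', h2'⟩ := mem_endpts.1 hy
    rw [← h2, ← h2', h1, h1']
  | succ i ih =>
    have hsub : endpts G (i + 1) c ⊆
        (endpts G i c).biUnion fun z => Finset.univ.filter (G.Adj z) := by
      intro y hy
      obtain ⟨p, hp, h1, h2⟩ := mem_endpts.1 hy
      refine Finset.mem_biUnion.2 ⟨p i, mem_endpts.2 ⟨p, ⟨fun j hj => hp.1 j (by omega),
        fun a b hab hb => hp.2 a b hab (by omega)⟩, h1, rfl⟩, ?_⟩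
      rw [Finset.mem_filter, ← h2]
      exact ⟨Finset.mem_univ _, hp.1 i (by omega)⟩
    rw [pow_succ]
    exact (Finset.card_le_card hsub).trans ((Finset.card_biUnion_le_card_mul _ _ Δ
      fun z _ => hΔ z).trans (Nat.mul_le_mul_right _ ih))

/-- If `(v, x)` is bad then `x` has many neighbours at the end of a path of length `ℓ - 1` from
`v`: each of them is the penultimate vertex of few admissible paths. -/
lemma Bad.many_neighbours {G : SimpleGraph V} [DecidableRel G.Adj] {L : ℝ} (hL : 1 ≤ L) {ℓ : ℕ}
    (hℓ : 2 ≤ ℓ) {v x : V} (h : Bad G L ℓ v x) :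
    fBound ℓ L < ((endpts G (ℓ - 1) v).filter (G.Adj x)).card * fBound (ℓ - 1) L := by
  refine h.lt_card.trans_le ?_
  have hmap : ∀ q ∈ admF G L ℓ v x, q (ℓ - 1) ∈ (endpts G (ℓ - 1) v).filter (G.Adj x) := by
    intro q hq
    obtain ⟨h1, h2, -, hadm⟩ := mem_admF.1 hq
    refine Finset.mem_filter.2 ⟨mem_endpts.2 ⟨q, ?_, h1, rfl⟩, ?_⟩
    · exact ⟨fun j hj => hadm.1.1 j (by omega), fun a b hab hb => hadm.1.2 a b hab (by omega)⟩
    · have := hadm.1.1 (ℓ - 1) (by omega)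
      rw [Nat.sub_add_cancel (by omega), h2] at this
      exact this.symm
  have h1 := Finset.card_eq_sum_card_fiberwise hmap
  rw [h1, Nat.cast_sum, ← nsmul_eq_mul]
  exact Finset.sum_le_card_nsmul _ _ _ fun w _ => card_admF_filter_last_le G hL hℓ v x w

/-- Between the vertices of a bad pair there is a path of length `ℓ` whose interior avoids any
given small set. -/
lemma Bad.exists_avoiding {G : SimpleGraph V} {L : ℝ} (hL : 1 ≤ L) {ℓ : ℕ} (hℓ : 2 ≤ ℓ)
    {v x : V} (h : Bad G L ℓ v x) (B : Finset V)
    (hB : (ℓ * B.card : ℝ) * fBound (ℓ - 1) L ^ 2 ≤ fBound ℓ L) :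
    ∃ l : List V, l.length = ℓ - 1 ∧ List.IsChain G.Adj (v :: (l ++ [x])) ∧
      (v :: (l ++ [x])).Nodup ∧ ∀ w ∈ l, w ∉ B := by
  classical
  obtain ⟨q, hq, hav⟩ : ∃ q ∈ admF G L ℓ v x, ∀ i, 0 < i → i < ℓ → q i ∉ B := by
    by_contra hcon
    push Not at hcon
    have hsub : admF G L ℓ v x ⊆ (Finset.Ioo 0 ℓ).biUnion fun i => B.biUnion fun w =>
        (admF G L ℓ v x).filter (fun q => q i = w) := by
      intro q hq
      obtain ⟨i, h0, hi, hiB⟩ := hcon q hq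
      exact Finset.mem_biUnion.2 ⟨i, Finset.mem_Ioo.2 ⟨h0, hi⟩, Finset.mem_biUnion.2
        ⟨q i, hiB, Finset.mem_filter.2 ⟨hq, rfl⟩⟩⟩
    have h1 : (admF G L ℓ v x).card ≤ ℓ * (B.card * ⌊fBound (ℓ - 1) L ^ 2⌋₊) := by
      refine (Finset.card_le_card hsub).trans ?_
      refine (Finset.card_biUnion_le_card_mul _ _ (B.card * ⌊fBound (ℓ - 1) L ^ 2⌋₊)
        fun i hi => ?_).trans (Nat.mul_le_mul_right _ (by simp))
      rw [Finset.mem_Ioo] at hi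
      exact Finset.card_biUnion_le_card_mul _ _ _ fun w _ =>
        Nat.le_floor (card_admF_filter_le_sq G hL v x w hi.1 hi.2)
    have h2 : ((admF G L ℓ v x).card : ℝ) ≤ (ℓ * B.card : ℝ) * fBound (ℓ - 1) L ^ 2 := by
      calc ((admF G L ℓ v x).card : ℝ) ≤ ℓ * (B.card * (⌊fBound (ℓ - 1) L ^ 2⌋₊ : ℝ)) := by
            exact_mod_cast h1
        _ ≤ ℓ * (B.card * fBound (ℓ - 1) L ^ 2) := by
            have := Nat.floor_le (sq_nonneg (fBound (ℓ - 1) L))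
            gcongr
        _ = _ := by ring
    exact absurd (h.lt_card.trans_le (h2.trans hB)) (lt_irrefl _)
  obtain ⟨h1, h2, -, hadm⟩ := mem_admF.1 hq
  have hlist : v :: ((List.range (ℓ - 1)).map (fun i => q (i + 1)) ++ [x]) =
      (List.range (ℓ + 1)).map q := by
    obtain ⟨k, rfl⟩ : ∃ k, ℓ = k + 1 := ⟨ℓ - 1, by omega⟩
    rw [List.range_succ, List.range_succ_eq_map]
    simp [h1, h2, Function.comp_def]
  refine ⟨(List.range (ℓ - 1)).map (fun i => q (i + 1)), by simp, ?_, ?_, ?_⟩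
  · rw [hlist, List.isChain_iff_getElem]
    intro i hi
    simp only [List.length_map, List.length_range] at hi
    simpa using hadm.1.1 i (by omega)
  · rw [hlist]
    refine List.Nodup.map_on ?_ List.nodup_range
    intro i hi j hj hij
    rw [List.mem_range] at hi hj
    by_contra hne
    rcases Nat.lt_or_gt_of_ne hne with hlt | hlt
    · exact hadm.1.2 i j hlt (by omega) hij
    · exact hadm.1.2 j i hlt (by omega) hij.symm
  · intro w hw
    obtain ⟨i, hi, rfl⟩ := List.mem_map.1 hw
    rw [List.mem_range] at hi
    exact hav _ (by omega) (by omega)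

/-- Two bad pairs `(v, x)`, `(v, y)` for each of many vertices `v` give a path of length `2ℓ`
between `x` and `y` avoiding a given small set. -/
lemma exists_linking_path {G : SimpleGraph V} {L : ℝ} (hL : 1 ≤ L) {ℓ : ℕ} (hℓ : 2 ≤ ℓ) {N : ℕ}
    (hN : (ℓ * (N + ℓ) : ℝ) * fBound (ℓ - 1) L ^ 2 ≤ fBound ℓ L) {x y : V} (C : Finset V)
    (hC : N < C.card) (hx : ∀ v ∈ C, Bad G L ℓ v x) (hy : ∀ v ∈ C, Bad G L ℓ v y) (B : Finset V)
    (hB : B.card ≤ N) :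
    ∃ l : List V, l.length = 2 * ℓ - 1 ∧ List.IsChain G.Adj (x :: (l ++ [y])) ∧ l.Nodup ∧
        ∀ w ∈ l, w ∉ B := by
  obtain ⟨v, hv, hvB⟩ := Finset.exists_mem_notMem_of_card_lt_card (hB.trans_lt hC)
  have hf : 0 ≤ fBound (ℓ - 1) L ^ 2 := sq_nonneg _
  have hB' : (B.card : ℝ) ≤ N := by exact_mod_cast hB
  obtain ⟨l₁, hl₁, hch₁, hnd₁, hav₁⟩ := (hx v hv).exists_avoiding hL hℓ B (by
    refine le_trans (mul_le_mul_of_nonneg_right (mul_le_mul_of_nonneg_left ?_ ?_) hf) hN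
    · have : (0 : ℝ) ≤ ℓ := Nat.cast_nonneg _
      linarith
    · exact Nat.cast_nonneg _)
  obtain ⟨l₂, hl₂, hch₂, hnd₂, hav₂⟩ := (hy v hv).exists_avoiding hL hℓ (B ∪ l₁.toFinset) (by
    refine le_trans (mul_le_mul_of_nonneg_right (mul_le_mul_of_nonneg_left ?_ ?_) hf) hN
    · have h1 := Finset.card_union_le B l₁.toFinset
      have h2 := List.toFinset_card_le l₁
      have h3 : (B ∪ l₁.toFinset).card ≤ N + ℓ := by omega
      exact_mod_cast h3
    · exact Nat.cast_nonneg _)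
  have hch₁' : List.IsChain G.Adj (x :: (l₁.reverse ++ [v])) := by
    have : x :: (l₁.reverse ++ [v]) = (v :: (l₁ ++ [x])).reverse := by simp
    rw [this, List.isChain_reverse]
    exact hch₁.imp fun a b h => h.symm
  refine ⟨l₁.reverse ++ v :: l₂, ?_, ?_, ?_, ?_⟩
  · simp [hl₁, hl₂]; omega
  · have : x :: (l₁.reverse ++ v :: l₂ ++ [y]) = (x :: l₁.reverse) ++ (v :: (l₂ ++ [y])) := by simp
    rw [this, List.isChain_append]
    have h3 : x :: (l₁.reverse ++ [v]) = (x :: l₁.reverse) ++ [v] := by simp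
    rw [h3, List.isChain_append] at hch₁'
    exact ⟨hch₁'.1, hch₂, by simpa using hch₁'.2.2⟩
  · simp only [List.nodup_cons, List.nodup_append, List.mem_append, not_or] at hnd₁ hnd₂
    rw [List.nodup_append]
    refine ⟨List.nodup_reverse.2 hnd₁.2.1, List.nodup_cons.2 ⟨hnd₂.1.1, hnd₂.2.1⟩, ?_⟩
    rintro a ha b hb rfl
    rw [List.mem_reverse] at ha
    rcases List.mem_cons.1 hb with rfl | hb
    · exact hnd₁.1.1 ha
    · exact hav₂ a hb (Finset.mem_union_right _ (List.mem_toFinset.2 ha))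
  · intro w hw
    rcases List.mem_append.1 hw with hw | hw
    · exact hav₁ w (List.mem_reverse.1 hw)
    · rcases List.mem_cons.1 hw with rfl | hw
      · exact hvB
      · exact fun h => hav₂ w hw (Finset.mem_union_left _ h)

/-! ### Density of bad pairs around a vertex -/

/-- The vertices at the end of a path of length `ℓ - 1` from `c` which form a bad pair
with `v`. -/
noncomputable def badEnds (G : SimpleGraph V) (L : ℝ) (ℓ : ℕ) (c v : V) : Finset V := by
  classical
  exact (endpts G (ℓ - 1) c).filter (Bad G L ℓ v)

lemma mem_badEnds {G : SimpleGraph V} {L : ℝ} {ℓ : ℕ} {c v x : V} :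
    x ∈ badEnds G L ℓ c v ↔ x ∈ endpts G (ℓ - 1) c ∧ Bad G L ℓ v x := by
  simp [badEnds]

/-- Averaging: if every vertex `c` sees few bad pairs, then there are few admissible paths which
are not good, because each bad pair and second vertex `c` account for at most `f(ℓ - 1, L)` of
them. -/
lemma ncard_bad_paths_le (G : SimpleGraph V) [DecidableRel G.Adj] {L : ℝ} (hL : 1 ≤ L) {ℓ : ℕ}
    (hℓ : 2 ≤ ℓ) (Y : ℝ)
    (h : ∀ c, fBound (ℓ - 1) L ^ 2 *
      ∑ v ∈ Finset.univ.filter (G.Adj c), ((badEnds G L ℓ c v).card : ℝ) ≤ Y) :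
    (Set.ncard {q : ℕ → V | PadSeq ℓ q ∧ Admissible G L ℓ q ∧ ¬ Good G L ℓ q} : ℝ) ≤
      Fintype.card V * Y / fBound (ℓ - 1) L := by
  classical
  have hf : 0 < fBound (ℓ - 1) L := by unfold fBound; positivity
  have hfin : {q : ℕ → V | PadSeq ℓ q ∧ Admissible G L ℓ q ∧ ¬ Good G L ℓ q}.Finite :=
    (padSeq_finite ℓ).subset fun _ hq => hq.1
  have hsub : hfin.toFinset ⊆ Finset.univ.biUnion fun c =>
      (Finset.univ.filter (G.Adj c)).biUnion fun v => (badEnds G L ℓ c v).biUnion fun x =>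
        (admF G L ℓ v x).filter (fun q => q 1 = c) := by
    intro q hq
    obtain ⟨hpad, hadm, hng⟩ := hfin.mem_toFinset.1 hq
    simp only [Finset.mem_biUnion, Finset.mem_filter, Finset.mem_univ, true_and]
    refine ⟨q 1, q 0, (hadm.1.1 0 (by omega)).symm, q ℓ, mem_badEnds.2 ⟨mem_endpts.2
      ⟨fun a => q (1 + a), (good_iff.1 (hadm.good_suffix one_pos (by omega))).1.1, rfl, ?_⟩,
      q, rfl, rfl, hadm, hng⟩, mem_admF.2 ⟨rfl, rfl, hpad, hadm⟩, rfl⟩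
    dsimp only
    rw [Nat.add_sub_cancel' (by omega)]
  have h1 : (hfin.toFinset.card : ℝ) ≤ ∑ c : V, ∑ v ∈ Finset.univ.filter (G.Adj c),
      ((badEnds G L ℓ c v).card : ℝ) * fBound (ℓ - 1) L := by
    have h2 : hfin.toFinset.card ≤ ∑ c : V, ∑ v ∈ Finset.univ.filter (G.Adj c),
        ∑ x ∈ badEnds G L ℓ c v, ((admF G L ℓ v x).filter (fun q => q 1 = c)).card :=
      (Finset.card_le_card hsub).trans (Finset.card_biUnion_le.trans
        (Finset.sum_le_sum fun c _ => Finset.card_biUnion_le.trans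
          (Finset.sum_le_sum fun v _ => Finset.card_biUnion_le)))
    have h3 : (hfin.toFinset.card : ℝ) ≤ ∑ c : V, ∑ v ∈ Finset.univ.filter (G.Adj c),
        ∑ x ∈ badEnds G L ℓ c v,
          (((admF G L ℓ v x).filter (fun q => q 1 = c)).card : ℝ) := by exact_mod_cast h2
    refine h3.trans (Finset.sum_le_sum fun c _ => Finset.sum_le_sum fun v _ => ?_)
    rw [← nsmul_eq_mul]
    exact Finset.sum_le_card_nsmul _ _ _ fun x _ => card_admF_filter_first_le G hL hℓ v x c
  rw [Set.ncard_eq_toFinset_card _ hfin, le_div_iff₀ hf]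
  calc (hfin.toFinset.card : ℝ) * fBound (ℓ - 1) L
      ≤ (∑ c : V, ∑ v ∈ Finset.univ.filter (G.Adj c),
      ((badEnds G L ℓ c v).card : ℝ) * fBound (ℓ - 1) L) * fBound (ℓ - 1) L := by gcongr
    _ = ∑ c : V, fBound (ℓ - 1) L ^ 2 *
      ∑ v ∈ Finset.univ.filter (G.Adj c), ((badEnds G L ℓ c v).card : ℝ) := by
        rw [Finset.sum_mul]
        refine Finset.sum_congr rfl fun c _ => ?_
        rw [← Finset.sum_mul]
        ring
    _ ≤ ∑ _c : V, Y := Finset.sum_le_sum fun c _ => h c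
    _ = Fintype.card V * Y := by simp

/-- If the weights `a v` are large on average and the defects `U v` have a small total, then some
`v` has a large weight and a defect which is small compared with the square of the weight. In the
application `a v` is the number of vertices forming a bad pair with `v`, and `U v` is the number of
unlinked pairs among them. -/
lemma exists_dense_vertex (S : Finset V) (a U : V → ℝ) {d X F s : ℝ} (hX : 0 < X) (hs : 0 < s)
    (hd : 0 ≤ d) (hS : (S.card : ℝ) ≤ d) (hU0 : ∀ v, 0 ≤ U v)
    (ha : 2 * (d * X) < F * ∑ v ∈ S, a v) (hU : ∑ v ∈ S, U v ≤ s * X ^ 2) :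
    ∃ v ∈ S, X < F * a v ∧ d * U v ≤ s * F ^ 2 * a v ^ 2 := by
  obtain ⟨v, hv, hlt⟩ : ∃ v ∈ S, s * X ^ 2 + d * U v < s * X * (F * a v) := by
    refine Finset.exists_lt_of_sum_lt ?_
    rw [Finset.sum_add_distrib, Finset.sum_const, nsmul_eq_mul, ← Finset.mul_sum,
      ← Finset.mul_sum, ← Finset.mul_sum]
    have h1 : (S.card : ℝ) * (s * X ^ 2) ≤ d * (s * X ^ 2) := by gcongr
    have h2 : d * ∑ v ∈ S, U v ≤ d * (s * X ^ 2) := by gcongr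
    have h3 : s * X * (2 * (d * X)) < s * X * (F * ∑ v ∈ S, a v) := by gcongr
    nlinarith
  have hdU : 0 ≤ d * U v := mul_nonneg hd (hU0 v)
  have hXa : X < F * a v := by
    have : s * X * X < s * X * (F * a v) := by nlinarith
    exact lt_of_mul_lt_mul_left this (by positivity)
  refine ⟨v, hv, hXa, ?_⟩
  have h4 : s * X * (F * a v) ≤ s * (F * a v) * (F * a v) := by
    have : 0 ≤ F * a v := by linarith
    gcongr
  nlinarith [mul_pos hs (pow_pos hX 2)]

/-- Call `x`, `y` unlinked if at most `N` of the sets `A v` contain both of them. The sets `A v`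
together contain few unlinked pairs. -/
lemma sum_unlinked_le (S E : Finset V) (A : V → Finset V) (hA : ∀ v, A v ⊆ E) (N : ℕ) :
    ∑ v ∈ S, ∑ x ∈ A v, ((A v).filter (fun y =>
      ¬ N < (S.filter fun w => x ∈ A w ∧ y ∈ A w).card)).card ≤ N * E.card ^ 2 := by
  have h : ∀ v ∈ S, ∑ x ∈ A v, ((A v).filter (fun y =>
      ¬ N < (S.filter fun w => x ∈ A w ∧ y ∈ A w).card)).card ≤
      (((E ×ˢ E).filter fun z => ¬ N < (S.filter fun w => z.1 ∈ A w ∧ z.2 ∈ A w).card).filter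
        fun z => z.1 ∈ A v ∧ z.2 ∈ A v).card := by
    intro v _
    rw [← Finset.card_sigma]
    refine Finset.card_le_card_of_injOn (fun z => (z.1, z.2)) ?_ ?_
    · rintro ⟨x, y⟩ hz
      simp only [Finset.coe_sigma, Set.mem_sigma_iff, Finset.mem_coe, Finset.mem_filter] at hz
      simp only [Finset.mem_coe, Finset.mem_filter, Finset.mem_product]
      exact ⟨⟨⟨hA v hz.1, hA v hz.2.1⟩, hz.2.2⟩, hz.1, hz.2.1⟩
    · rintro ⟨x, y⟩ _ ⟨x', y'⟩ _ h
      simp only [Prod.mk.injEq] at h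
      obtain ⟨rfl, rfl⟩ := h
      rfl
  refine (Finset.sum_le_sum h).trans ?_
  have hdc := Finset.sum_card_bipartiteAbove_eq_sum_card_bipartiteBelow (s := S)
    (t := (E ×ˢ E).filter fun z => ¬ N < (S.filter fun w => z.1 ∈ A w ∧ z.2 ∈ A w).card)
    (fun v (z : V × V) => z.1 ∈ A v ∧ z.2 ∈ A v)
  simp only [Finset.bipartiteAbove, Finset.bipartiteBelow] at hdc
  rw [hdc, sq, ← Finset.card_product, mul_comm, ← smul_eq_mul]
  refine (Finset.sum_le_card_nsmul _ _ N fun z hz => ?_).trans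
    (Nat.mul_le_mul_right _ (Finset.card_filter_le _ _))
  exact not_lt.1 (Finset.mem_filter.1 hz).2

/-- The size conditions for `exists_linked_spiders`, followed by linking the spiders. -/
lemma contains_of_dense_set {t q p : ℕ} {m : Fin t → Fin t → ℕ} (hirr : ∀ a, m a a = 0)
    (G : SimpleGraph V) [DecidableRel G.Adj] (Lk : V → V → Prop) [DecidableRel Lk]
    (hLk : ∀ x y, Lk x y → Lk y x) (N D : ℕ) (f : ℝ) (hf : 1 ≤ f) (A W : Finset V)
    (hlink : ∀ x y, Lk x y → x ≠ y → ∀ B : Finset V, x ∈ B → y ∈ B → B.card ≤ N →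
      ∃ l : List V, l.length = p ∧ List.IsChain G.Adj (x :: (l ++ [y])) ∧ l.Nodup ∧
        ∀ w ∈ l, w ∉ B)
    (hD : Fintype.card (EdgeIdx m) * q + q < D)
    (hN : t * (1 + Fintype.card (EdgeIdx m) * q) + Fintype.card (EdgeIdx m) * p ≤ N)
    (hdeg : ∀ a ∈ A, (3 * D + N + 2 : ℝ) * f ^ 2 ≤ (W.filter (G.Adj a)).card)
    (hW : (W.card : ℝ) ≤ f ^ 2 * A.card) (hA : 4 * N < A.card)
    (hU : 64 * (t * Fintype.card (EdgeIdx m) + 1) *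
      ∑ x ∈ A, (A.filter (fun y => ¬ Lk x y)).card ≤ A.card ^ 2) :
    ContainsMultiSubdiv G t m (q + p + q + 1) := by
  have hN1 : t * (1 + Fintype.card (EdgeIdx m) * q) ≤ N := by omega
  have hM : ∀ a ∈ A, ⌈2 * D * f ^ 2⌉₊ + t * (1 + Fintype.card (EdgeIdx m) * q) + D + 1 ≤
      (W.filter (G.Adj a)).card := by
    intro a ha
    have h1 := hdeg a ha
    have h2 : (⌈2 * D * f ^ 2⌉₊ : ℝ) < 2 * D * f ^ 2 + 1 := Nat.ceil_lt_add_one (by positivity)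
    have h3 : ((⌈2 * D * f ^ 2⌉₊ + N + D + 1 : ℕ) : ℝ) ≤ (W.filter (G.Adj a)).card := by
      push_cast
      have h4 : ((D : ℝ) + N + 2) * 1 ≤ (D + N + 2) * f ^ 2 := by
        have := one_le_pow₀ hf (n := 2)
        gcongr
      linarith
    have h4 : ⌈2 * D * f ^ 2⌉₊ + N + D + 1 ≤ (W.filter (G.Adj a)).card := by exact_mod_cast h3
    omega
  have hW' : 2 * D * W.card ≤ ⌈2 * D * f ^ 2⌉₊ * A.card := by
    have h4 : (2 * D * W.card : ℝ) ≤ ⌈2 * D * f ^ 2⌉₊ * A.card := by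
      calc (2 * D * W.card : ℝ) ≤ 2 * D * (f ^ 2 * A.card) := by gcongr
        _ = (2 * D * f ^ 2) * A.card := by ring
        _ ≤ _ := by
            gcongr
            exact Nat.le_ceil _
    exact_mod_cast h4
  obtain ⟨g, hg, hgR⟩ := exists_linked_spiders (ι := EdgeIdx m) G Lk hLk t D q
    ⌈2 * D * f ^ 2⌉₊ A W hD hM hW' hU (by omega) (by omega)
  exact contains_of_linked_spiders (q := q) (p := p) hirr G Lk A N hlink hN g hg hgR

/-- The lower bound `d ≥ T s f ^ 4` turns the defect bound of `exists_dense_vertex`, with `F = f ^ 2`,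
into the density condition of `exists_linked_spiders`. -/
lemma unlinked_bound {T s f d u a : ℝ} (hf : 1 ≤ f) (hs : 0 < s) (hu : 0 ≤ u)
    (hd : T * s * f ^ 4 ≤ d) (h : d * u ≤ s * (f ^ 2) ^ 2 * a ^ 2) : T * u ≤ a ^ 2 := by
  refine le_of_mul_le_mul_left (a := s * (f ^ 2) ^ 2) ?_ (by positivity)
  calc s * (f ^ 2) ^ 2 * (T * u) = T * s * f ^ 4 * u := by ring
    _ ≤ d * u := mul_le_mul_of_nonneg_right hd hu
    _ ≤ _ := h

/-- If some vertex `c` sees many bad pairs, then `G` contains the subdivision. -/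
lemma contains_of_many_badEnds {t : ℕ} {m : Fin t → Fin t → ℕ} (hirr : ∀ a, m a a = 0)
    (G : SimpleGraph V) [DecidableRel G.Adj] {L : ℝ} (hL : 1 ≤ L) {ℓ k : ℕ} (hℓ : 2 ≤ ℓ)
    (hk : ℓ ≤ k) (Δ N D : ℕ) (hΔ : ∀ v, (Finset.univ.filter (G.Adj v)).card ≤ Δ)
    (hD : Fintype.card (EdgeIdx m) * (k - ℓ) + (k - ℓ) < D)
    (hN : t * (1 + Fintype.card (EdgeIdx m) * (k - ℓ)) +
      Fintype.card (EdgeIdx m) * (2 * ℓ - 1) ≤ N)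
    (h1 : (ℓ * (N + ℓ) : ℝ) * fBound (ℓ - 1) L ^ 2 ≤ fBound ℓ L)
    (h2 : (3 * D + N + 2 : ℝ) * fBound (ℓ - 1) L ^ 3 ≤ fBound ℓ L)
    (h3 : (64 * (t * Fintype.card (EdgeIdx m) + 1) * (N + 1) : ℝ) * fBound (ℓ - 1) L ^ 4 ≤ Δ)
    (c : V) (hc : 2 * (Δ : ℝ) ^ ℓ < fBound (ℓ - 1) L ^ 2 *
      ∑ v ∈ Finset.univ.filter (G.Adj c), ((badEnds G L ℓ c v).card : ℝ)) :
    ContainsMultiSubdiv G t m (2 * k) := by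
  classical
  have hf : 1 ≤ fBound (ℓ - 1) L := one_le_pow₀ hL
  generalize hfdef : fBound (ℓ - 1) L = f at *
  generalize hQ : Fintype.card (EdgeIdx m) = Q at *
  have hpow : ∀ i, 1 ≤ f ^ i := fun i => one_le_pow₀ hf
  have hΔ1 : (1 : ℝ) ≤ Δ := by
    refine le_trans (one_le_mul_of_one_le_of_one_le ?_ (hpow 4)) h3
    have h0 : (0 : ℝ) ≤ t * Q := by positivity
    have h0' : (0 : ℝ) ≤ N := by positivity
    nlinarith
  set X : ℝ := (Δ : ℝ) ^ (ℓ - 1) with hX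
  have hXΔ : (Δ : ℝ) ^ ℓ = Δ * X := by
    rw [hX, ← pow_succ', Nat.sub_add_cancel (by omega)]
  have hΔX : (Δ : ℝ) ≤ X := le_self_pow₀ hΔ1 (by omega)
  set Nc := Finset.univ.filter (G.Adj c)
  set E := endpts G (ℓ - 1) c
  have hEc : (E.card : ℝ) ≤ X := by
    rw [hX]; exact_mod_cast card_endpts_le G Δ hΔ (ℓ - 1) c
  -- `cm x y` consists of the neighbours of `c` forming a bad pair with both `x` and `y`; the
  -- vertices `x` and `y` are linked if there are more than `N` of them
  let cm : V → V → Finset V := fun x y =>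
    Nc.filter fun v => x ∈ badEnds G L ℓ c v ∧ y ∈ badEnds G L ℓ c v
  let U : V → ℕ := fun v => ∑ x ∈ badEnds G L ℓ c v,
    ((badEnds G L ℓ c v).filter (fun y => ¬ N < (cm x y).card)).card
  have hU : ∑ v ∈ Nc, U v ≤ N * E.card ^ 2 :=
    sum_unlinked_le Nc E (badEnds G L ℓ c) (fun v x hx => (mem_badEnds.1 hx).1) N
  have hU' : ∑ v ∈ Nc, (U v : ℝ) ≤ (N + 1 : ℝ) * X ^ 2 := by
    have h4 : ∑ v ∈ Nc, (U v : ℝ) ≤ N * (E.card : ℝ) ^ 2 := by exact_mod_cast hU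
    have h5 : (E.card : ℝ) ^ 2 ≤ X ^ 2 := by gcongr
    nlinarith [sq_nonneg X, (Nat.cast_nonneg N : (0 : ℝ) ≤ N)]
  obtain ⟨v, hv, hav, hUv⟩ := exists_dense_vertex Nc
    (fun v => ((badEnds G L ℓ c v).card : ℝ)) (fun v => (U v : ℝ)) (d := Δ) (X := X)
    (F := f ^ 2) (s := N + 1) (by linarith) (by positivity) (by linarith)
    (by exact_mod_cast hΔ c) (fun v => Nat.cast_nonneg _) (by rw [← hXΔ]; exact hc) hU'
  have hWc : ((endpts G (ℓ - 1) v).card : ℝ) ≤ X := by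
    rw [hX]; exact_mod_cast card_endpts_le G Δ hΔ (ℓ - 1) v
  have h2k : (k - ℓ) + (2 * ℓ - 1) + (k - ℓ) + 1 = 2 * k := by omega
  rw [← h2k]
  refine contains_of_dense_set hirr G (fun x y => N < (cm x y).card) ?_ N D f hf
    (badEnds G L ℓ c v) (endpts G (ℓ - 1) v) ?_ (by rw [hQ]; exact hD) (by rw [hQ]; exact hN)
    ?_ (hWc.trans hav.le) ?_ ?_
  · intro x y h
    have : cm y x = cm x y := Finset.filter_congr fun v _ => and_comm
    rw [this]
    exact h
  · intro x y hxy _ B _ _ hB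
    refine exists_linking_path hL hℓ (by rw [hfdef]; exact h1) (cm x y) hxy ?_ ?_ B hB
    · intro w hw
      exact (mem_badEnds.1 (Finset.mem_filter.1 hw).2.1).2
    · intro w hw
      exact (mem_badEnds.1 (Finset.mem_filter.1 hw).2.2).2
  -- `f(ℓ, L) = f(ℓ - 1, L) ^ 5`, so a vertex of a bad pair has at least `f(ℓ - 1, L) ^ 4`
  -- neighbours among the endpoints, while order `f(ℓ - 1, L) ^ 2` are needed
  · intro a ha
    have h4 := (mem_badEnds.1 ha).2.many_neighbours hL hℓ
    rw [hfdef] at h4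
    refine le_of_mul_le_mul_right ?_ (by linarith : 0 < f)
    refine le_trans ?_ h4.le
    calc _ = (3 * D + N + 2 : ℝ) * f ^ 3 := by ring
      _ ≤ _ := h2
  · have h4 : (4 * N : ℝ) < (badEnds G L ℓ c v).card := by
      refine lt_of_mul_lt_mul_left (a := f ^ 2) ?_ (sq_nonneg f)
      refine lt_of_le_of_lt ?_ hav
      refine le_trans (le_trans ?_ h3) hΔX
      rw [mul_comm]
      have h6 : f ^ 2 ≤ f ^ 4 := pow_le_pow_right₀ hf (by norm_num)
      refine mul_le_mul ?_ h6 (by positivity) (by positivity)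
      have h0 : (0 : ℝ) ≤ t * Q * (N + 1) := by positivity
      have h0' : (0 : ℝ) ≤ N := by positivity
      linarith
    exact_mod_cast h4
  · rw [hQ]
    have h4 := unlinked_bound hf (by positivity) (Nat.cast_nonneg (U v)) h3 hUv
    exact_mod_cast h4

lemma card_filter_adj_le_maxDeg (G : SimpleGraph V) [DecidableRel G.Adj] (v : V) :
    (Finset.univ.filter (G.Adj v)).card ≤ maxDeg G := by
  refine le_csSup (Set.finite_range fun v => (G.neighborSet v).ncard).bddAbove ⟨v, ?_⟩
  rw [← Set.ncard_coe_finset]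
  congr 1
  ext w
  simp

/-- **Corollary 3.5.** With `H = F^{2k-1}`: there is `L0` such that for
`L ≥ L0` and `n` large, if `G` is an `H`-free `K`-almost-regular graph on `n` vertices with
minimum degree `δ ≥ L^{100^k·|V(H)|}`, then for every `2 ≤ ℓ ≤ k` the number of
`L`-admissible but not `L`-good paths of length `ℓ` is at most `2n(Kδ)^ℓ / f(ℓ-1, L)`. -/
theorem count_admissible_not_good_paths
    (t : ℕ) (m : Fin t → Fin t → ℕ)
    (hsymm : ∀ a b, m a b = m b a) (hirr : ∀ a, m a a = 0)
    (k K : ℕ) (hk : 1 ≤ k) (hK : 1 ≤ K) :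
    ∃ (L0 : ℝ) (n0 : ℕ), 1 < L0 ∧
      ∀ n : ℕ, n0 ≤ n → ∀ L : ℝ, L0 ≤ L → ∀ G : SimpleGraph (Fin n),
        ¬ ContainsMultiSubdiv G t m (2 * k) →
        maxDeg G ≤ K * minDeg G →
        L ^ (100 ^ k * nH t k m) ≤ (minDeg G : ℝ) →
        ∀ ℓ : ℕ, 2 ≤ ℓ → ℓ ≤ k →
          (Set.ncard {q : ℕ → Fin n | PadSeq ℓ q ∧
              Admissible G L ℓ q ∧ ¬ Good G L ℓ q} : ℝ) ≤
            2 * n * ((K : ℝ) * (minDeg G : ℝ)) ^ ℓ / fBound (ℓ - 1) L := by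
  classical
  set Q := Fintype.card (EdgeIdx m)
  set N := t * (1 + Q * k) + Q * (2 * k) with hN
  set D := Q * k + k + 1 with hD
  -- one constant dominating all the factors that have to be absorbed into a power of `L`
  set C : ℕ := k * (N + k) + (3 * D + N + 2) + 64 * (t * Q + 1) * (N + 1) with hC
  refine ⟨C, 0, by exact_mod_cast (by omega : 1 < C), ?_⟩
  intro n _ L hL G hfree hreg hδ ℓ hℓ hℓk
  have hL1 : 1 ≤ L := le_trans (by exact_mod_cast (by omega : 1 ≤ C)) hL
  by_contra hcon
  have hex : ∃ c, 2 * ((K * minDeg G : ℕ) : ℝ) ^ ℓ < fBound (ℓ - 1) L ^ 2 *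
      ∑ v ∈ Finset.univ.filter (G.Adj c), ((badEnds G L ℓ c v).card : ℝ) := by
    by_contra! hall
    refine hcon ((ncard_bad_paths_le G hL1 hℓ _ hall).trans_eq ?_)
    rw [Fintype.card_fin]
    push_cast
    ring
  obtain ⟨c, hc⟩ := hex
  -- for `t = 0` the lower bound on the degree is void, but every graph contains the empty graph
  rcases Nat.eq_zero_or_pos t with rfl | ht
  · exact hfree ⟨fun a => a.elim0, fun a => a.elim0, fun a => a.elim0, fun a => a.elim0,
      fun a => a.elim0, fun a => a.elim0⟩
  have hf5 : fBound (ℓ - 1) L ^ 5 = fBound ℓ L := by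
    rw [fBound, fBound, ← pow_mul, ← pow_succ, Nat.sub_add_cancel (by omega)]
  have hLf : L ≤ fBound (ℓ - 1) L := le_self_pow₀ hL1 (by positivity)
  have hf1 : 1 ≤ fBound (ℓ - 1) L := hL1.trans hLf
  have key : ∀ a i : ℕ, a ≤ C → i ≤ 4 → (a : ℝ) * fBound (ℓ - 1) L ^ i ≤ fBound ℓ L := by
    intro a i ha hi
    rw [← hf5, pow_succ']
    have h1 : (a : ℝ) ≤ C := by exact_mod_cast ha
    have h2 : fBound (ℓ - 1) L ^ i ≤ fBound (ℓ - 1) L ^ 4 := pow_le_pow_right₀ hf1 hi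
    exact mul_le_mul (h1.trans (hL.trans hLf)) h2 (by positivity) (by linarith)
  have hΔ : fBound ℓ L ≤ ((K * minDeg G : ℕ) : ℝ) := by
    have h1 : fBound ℓ L ≤ L ^ (100 ^ k * nH t k m) := by
      refine pow_le_pow_right₀ hL1 ?_
      have h2 : 5 ^ ℓ ≤ 100 ^ k :=
        (Nat.pow_le_pow_left (by norm_num) ℓ).trans (Nat.pow_le_pow_right (by norm_num) hℓk)
      have h3 : 1 ≤ nH t k m := le_trans ht (Nat.le_add_right _ _)
      exact h2.trans (Nat.le_mul_of_pos_right _ h3)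
    have h4 : minDeg G ≤ K * minDeg G := Nat.le_mul_of_pos_left _ hK
    exact h1.trans (hδ.trans (by exact_mod_cast h4))
  refine hfree (contains_of_many_badEnds hirr G hL1 hℓ hℓk (K * minDeg G) N D
    (fun v => (card_filter_adj_le_maxDeg G v).trans hreg) ?_ ?_ ?_ ?_ ?_ c hc)
  · have : Fintype.card (EdgeIdx m) * (k - ℓ) ≤ Q * k := Nat.mul_le_mul_left _ (Nat.sub_le _ _)
    omega
  · refine Nat.add_le_add (Nat.mul_le_mul_left _ (Nat.add_le_add_left
      (Nat.mul_le_mul_left _ (Nat.sub_le _ _)) _)) (Nat.mul_le_mul_left _ (by omega))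
  · have h1 : ℓ * (N + ℓ) ≤ k * (N + k) := Nat.mul_le_mul hℓk (by omega)
    exact_mod_cast key (ℓ * (N + ℓ)) 2 (by omega) (by norm_num)
  · exact_mod_cast key (3 * D + N + 2) 3 (by omega) (by norm_num)
  · refine le_trans ?_ hΔ
    exact_mod_cast key (64 * (t * Q + 1) * (N + 1)) 4 (by omega) le_rfl
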